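/- arXiv:1909.05207 — 3 statements merged into one kernel-verified Lean document; each statement's English description precedes it below -/
import Mathlib

section
/- Let K ⊆ ℝ^d be a compact convex set with Euclidean diameter at most D, and let f_1,...,f_T : K → ℝ be differentiable convex functions with ‖∇f_t(x)‖ ≤ G for all x ∈ K. Run the online conditional gradient algorithm with parameters η = D/(2G·T^{3/4}) and σ_t = min{1, 2/t^{1/2}}: starting from x_1 ∈ K, at each round t set ∇_t = ∇f_t(x_t), define F_t(x) = η·Σ_{τ=1}^{t−1} ⟨∇_τ, x⟩ + ‖x − x_1‖², compute v_t ∈ argmin_{x ∈ K} ⟨∇F_t(x_t), x⟩, and set x_{t+1} = (1 − σ_t)x_t + σ_t v_t. Then: Σ_{t=1}^T f_t(x_t) − min_{x ∈ K} Σ_{t=1}^T f_t(x) ≤ 8·D·G·T^{3/4}. -/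
open scoped RealInnerProductSpace

/-!
Let `m_t` minimize `F_t` over `K`. Convexity bounds the regret by `∑ ⟪∇_t, x_t - z⟫`, which splits
into `∑ ⟪∇_t, m_t - z⟫` and `∑ ⟪∇_t, x_t - m_t⟫`.

The first sum is the linear regret of follow-the-regularized-leader: `F_t` grows like `‖y - m_t‖²`
away from `m_t`, so `min F_{t+1} ≥ min F_t + ⟪η ∇_t, m_t⟫ - ‖η ∇_t‖² / 4`, and this telescopes.

For the second sum, put `h_t = F_t x_t - F_t m_t ≥ ‖x_t - m_t‖²`. One conditional gradient step
followed by the change of objective gives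
`h_{t+1} ≤ (1 - σ_t) h_t + σ_t² D² + η G √h_{t+1}`, and the choice of `σ` and `η` propagates
`h_t ≤ 4 D² / √t` along this recursion.

To have minimizers in an arbitrary inner product space, replace `K` by the convex hull of the
finitely many points `x_1, v_1, …, v_T, z`: it is compact and contains every iterate.
-/

section RealInequalities

lemma le_of_sq_le_add_mul {A e B b : ℝ} (hA : 0 ≤ A) (hB : 0 < B) (hAB : A + e * B ≤ B ^ 2)
    (hb : b ^ 2 ≤ A + e * b) : b ≤ B := by
  by_contra! hlt
  have he : e ≤ B := le_of_mul_le_mul_right (by linarith) hB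
  nlinarith

lemma mul_sum_Icc_rpow_sub_one_le {q : ℝ} (hq₀ : 0 ≤ q) (hq₁ : q ≤ 1) (n : ℕ) :
    q * ∑ t ∈ Finset.Icc 1 n, (t : ℝ) ^ (q - 1) ≤ (n : ℝ) ^ q := by
  induction n with
  | zero => simpa using Real.rpow_nonneg le_rfl q
  | succ n ih =>
    have hpos : (0 : ℝ) < n + 1 := by positivity
    have bernoulli : (1 + -1 / ((n : ℝ) + 1)) ^ q ≤ 1 + q * (-1 / ((n : ℝ) + 1)) :=
      rpow_one_add_le_one_add_mul_self (by rw [le_div_iff₀ hpos]; linarith) hq₀ hq₁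
    have increment : (n : ℝ) ^ q ≤ ((n : ℝ) + 1) ^ q - q * ((n : ℝ) + 1) ^ (q - 1) := by
      calc (n : ℝ) ^ q = ((n : ℝ) + 1) ^ q * (1 + -1 / ((n : ℝ) + 1)) ^ q := by
            have hfactor : 1 + -1 / ((n : ℝ) + 1) = n / (n + 1) := by field_simp; ring
            rw [hfactor, ← Real.mul_rpow hpos.le (by positivity), mul_div_cancel₀ _ hpos.ne']
        _ ≤ ((n : ℝ) + 1) ^ q * (1 + q * (-1 / ((n : ℝ) + 1))) := by gcongr
        _ = ((n : ℝ) + 1) ^ q - q * ((n : ℝ) + 1) ^ (q - 1) := by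
            rw [Real.rpow_sub_one hpos.ne']; ring
    rw [Finset.sum_Icc_succ_top (by omega), mul_add]
    push_cast
    linarith

lemma four_div_sub_add_le_four_div {r s : ℝ} (hs : 1 ≤ s) (hr : 0 < r) (hrs : r ^ 2 = s ^ 2 + 1) :
    4 / s - 4 / s ^ 2 + 1 / r ^ 2 ≤ 4 / r := by
  have hsr : s ≤ r := by nlinarith
  have cross_mul : (4 * s - 3) * r ≤ 4 * s ^ 2 := by
    refine le_of_sq_le_sq ?_ (by positivity)
    nlinarith [mul_nonneg (sq_nonneg s) (sub_nonneg.2 hs)]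
  calc 4 / s - 4 / s ^ 2 + 1 / r ^ 2 ≤ 4 / s - 4 / s ^ 2 + 1 / s ^ 2 := by gcongr
    _ = (4 * s - 3) / s ^ 2 := by field_simp; ring
    _ ≤ 4 / r := by rwa [div_le_div_iff₀ (by positivity) hr]

lemma stepSize_recursion_le {σ : ℝ} {t : ℕ} (ht : 1 ≤ t) (hσ : σ = min 1 (2 / √t)) :
    (1 - σ) * (4 / √t) + σ ^ 2 + 1 / ((t : ℝ) + 1) ≤ 4 / √((t : ℝ) + 1) := by
  have ht' : (1 : ℝ) ≤ t := by exact_mod_cast ht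
  have hs : 1 ≤ √(t : ℝ) := Real.one_le_sqrt.2 ht'
  have hr : 0 < √((t : ℝ) + 1) := by positivity
  rcases le_or_gt 4 t with large | small
  · have hs_two : 2 ≤ √(t : ℝ) := Real.le_sqrt_of_sq_le (by norm_num; exact_mod_cast large)
    have hs_sq : √(t : ℝ) ^ 2 = t := Real.sq_sqrt (by positivity)
    have hr_sq : √((t : ℝ) + 1) ^ 2 = t + 1 := Real.sq_sqrt (by positivity)
    have hroots := four_div_sub_add_le_four_div hs hr (by rw [hr_sq, hs_sq])
    rw [hr_sq] at hroots
    rw [hσ, min_eq_right ((div_le_one (by positivity)).2 hs_two)]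
    refine le_of_eq_of_le ?_ hroots
    field_simp
    ring
  · have ht_le : (t : ℝ) + 1 ≤ 4 := by exact_mod_cast small
    have hr_two : √((t : ℝ) + 1) ≤ 2 := Real.sqrt_le_iff.2 ⟨by norm_num, by linarith⟩
    have hs_two : √(t : ℝ) ≤ 2 := (Real.sqrt_le_sqrt (by linarith)).trans hr_two
    rw [hσ, min_eq_left ((one_le_div (by positivity)).2 hs_two)]
    have h_inv : 1 / ((t : ℝ) + 1) ≤ 1 := (div_le_one (by positivity)).2 (by linarith)
    have h_four : 2 ≤ 4 / √((t : ℝ) + 1) := (le_div_iff₀ hr).2 (by linarith)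
    linarith

lemma sq_rpow_neg_one_div_four {y : ℝ} (hy : 0 ≤ y) : (y ^ (-(1 / 4) : ℝ)) ^ 2 = 1 / √y := by
  rw [← Real.rpow_mul_natCast hy, Real.sqrt_eq_rpow, one_div (y ^ _), ← Real.rpow_neg hy]
  norm_num

end RealInequalities

lemma sub_le_inner_of_convexOn_of_hasGradientAt {E : Type*} [NormedAddCommGroup E]
    [InnerProductSpace ℝ E] [CompleteSpace E] {K : Set E} {f : E → ℝ} (hf : ConvexOn ℝ K f)
    {x y g : E} (hx : x ∈ K) (hy : y ∈ K) (hg : HasGradientAt f g x) :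
    f x - f y ≤ ⟪g, x - y⟫ := by
  have hderiv : HasDerivAt (f ∘ AffineMap.lineMap x y) ⟪g, y - x⟫ (0 : ℝ) := by
    have hfderiv : HasFDerivAt f (InnerProductSpace.toDual ℝ E g)
        (AffineMap.lineMap x y (0 : ℝ)) := by
      simpa only [AffineMap.lineMap_apply_zero] using hg.hasFDerivAt
    simpa only [InnerProductSpace.toDual_apply_apply] using
      hfderiv.comp_hasDerivAt (0 : ℝ) AffineMap.hasDerivAt_lineMap
  have hslope : ⟪g, y - x⟫ ≤ slope (f ∘ AffineMap.lineMap x y) (0 : ℝ) 1 :=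
    (hf.comp_affineMap (AffineMap.lineMap x y)).le_slope_of_hasDerivAt
      (by simpa using hx) (by simpa using hy) one_pos hderiv
  have hle : ⟪g, y - x⟫ ≤ f y - f x := by simpa [slope_def_field] using hslope
  rw [← neg_sub y x, inner_neg_right]
  linarith

section AccumulatedLoss

variable {M : Type*} [AddCommMonoid M]

/-- The sum of the linear losses of the rounds before round `t`; rounds are numbered from `1`. -/
def accumulatedLoss (a : ℕ → M) (t : ℕ) : M := ∑ τ ∈ Finset.Icc 1 (t - 1), a τ

lemma accumulatedLoss_one (a : ℕ → M) : accumulatedLoss a 1 = 0 := by simp [accumulatedLoss]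

lemma accumulatedLoss_succ (a : ℕ → M) {t : ℕ} (ht : 1 ≤ t) :
    accumulatedLoss a (t + 1) = accumulatedLoss a t + a t := by
  obtain ⟨n, rfl⟩ := Nat.exists_eq_add_of_le' ht
  exact Finset.sum_Icc_succ_top (by omega) a

end AccumulatedLoss

section InnerProductSpace

variable {E : Type*} [NormedAddCommGroup E] [InnerProductSpace ℝ E]

section ProximalLinear

/-- The linear function `⟪s, ·⟫` regularized by the squared distance to `c`. The objective `F_t` of
the algorithm is of this form, with `s = η ∑_{τ < t} ∇_τ` and `c = x_1`. -/
def proximalLinear (s c y : E) : ℝ := ⟪s, y⟫ + ‖y - c‖ ^ 2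

/-- `m` minimizes `φ` on `K`, and `φ` grows at least quadratically away from `m`, with the constant
`1` of a strongly convex function of modulus `2`. -/
def IsStrongMinOn (φ : E → ℝ) (K : Set E) (m : E) : Prop :=
  m ∈ K ∧ ∀ y ∈ K, φ m + ‖y - m‖ ^ 2 ≤ φ y

variable {K : Set E} {s c : E}

lemma proximalLinear_add_left (s a c y : E) :
    proximalLinear (s + a) c y = proximalLinear s c y + ⟪a, y⟫ := by
  simp only [proximalLinear, inner_add_left]
  ring

lemma proximalLinear_add_right (s c y w : E) :
    proximalLinear s c (y + w) =
      proximalLinear s c y + ⟪s + (2 : ℝ) • (y - c), w⟫ + ‖w‖ ^ 2 := by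
  have hcenter : y + w - c = (y - c) + w := by abel
  simp only [proximalLinear, hcenter, norm_add_sq_real, inner_add_left, inner_add_right,
    real_inner_smul_left]
  ring

-- Completing the square, the minimizer is the projection of `c - s / 2` onto `K`.
lemma exists_isStrongMinOn_proximalLinear (hne : K.Nonempty) (hcomplete : IsComplete K)
    (hK : Convex ℝ K) (s c : E) : ∃ m, IsStrongMinOn (proximalLinear s c) K m := by
  obtain ⟨m, hm, hproj⟩ :=
    exists_norm_eq_iInf_of_complete_convex hne hcomplete hK (c - (2⁻¹ : ℝ) • s)
  rw [norm_eq_iInf_iff_real_inner_le_zero hK hm] at hproj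
  refine ⟨m, hm, fun y hy => ?_⟩
  have hgrad : s + (2 : ℝ) • (m - c) = (-2 : ℝ) • (c - (2⁻¹ : ℝ) • s - m) := by module
  have hexpand := proximalLinear_add_right s c m (y - m)
  rw [add_sub_cancel, hgrad, real_inner_smul_left] at hexpand
  linarith [hproj y hy]

lemma proximalLinear_conditionalGradient_step_sub_le {x v m : E} {l D : ℝ} (hl : 0 ≤ l)
    (hv : ⟪s + (2 : ℝ) • (x - c), v⟫ ≤ ⟪s + (2 : ℝ) • (x - c), m⟫) (hD : ‖v - x‖ ≤ D) :
    proximalLinear s c ((1 - l) • x + l • v) - proximalLinear s c m ≤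
      (1 - l) * (proximalLinear s c x - proximalLinear s c m) + l ^ 2 * D ^ 2 := by
  have hstep : (1 - l) • x + l • v = x + l • (v - x) := by module
  have hdescent : l * ⟪s + (2 : ℝ) • (x - c), v - x⟫ ≤
      l * (proximalLinear s c m - proximalLinear s c x) := by
    have hexpand := proximalLinear_add_right s c x (m - x)
    rw [add_sub_cancel] at hexpand
    gcongr
    rw [hexpand]
    simp only [inner_sub_right]
    linarith [sq_nonneg ‖m - x‖]
  have hquad : ‖l • (v - x)‖ ^ 2 ≤ l ^ 2 * D ^ 2 := by
    rw [norm_smul, mul_pow, Real.norm_eq_abs, sq_abs]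
    gcongr
  rw [hstep, proximalLinear_add_right, real_inner_smul_right]
  linarith

lemma IsStrongMinOn.add_inner_sub_le {m m' a : E} (hm : IsStrongMinOn (proximalLinear s c) K m)
    (hm' : m' ∈ K) :
    proximalLinear s c m + (⟪a, m⟫ - ‖a‖ ^ 2 / 4) ≤ proximalLinear (s + a) c m' := by
  have hgrowth := hm.2 m' hm'
  have hcs : ⟪a, m - m'⟫ ≤ ‖a‖ * ‖m' - m‖ := norm_sub_rev m m' ▸ real_inner_le_norm a (m - m')
  rw [inner_sub_right] at hcs
  rw [proximalLinear_add_left]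
  linarith [sq_nonneg (‖m' - m‖ - ‖a‖ / 2)]

lemma IsStrongMinOn.gap_add_left_le {x m m' a : E} (hm : IsStrongMinOn (proximalLinear s c) K m)
    (hm' : m' ∈ K) :
    proximalLinear (s + a) c x - proximalLinear (s + a) c m' ≤
      proximalLinear s c x - proximalLinear s c m + ‖a‖ * ‖x - m'‖ := by
  have hgrowth := hm.2 m' hm'
  have hcs := real_inner_le_norm a (x - m')
  rw [inner_sub_right] at hcs
  rw [proximalLinear_add_left, proximalLinear_add_left]
  linarith [sq_nonneg ‖m' - m‖]

end ProximalLinear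

section Leader

variable {K : Set E} {a m : ℕ → E} {c z : E}

lemma sum_inner_leader_le_min
    (hm : ∀ t, IsStrongMinOn (proximalLinear (accumulatedLoss a t) c) K (m t)) (n : ℕ) :
    ∑ t ∈ Finset.Icc 1 n, (⟪a t, m t⟫ - ‖a t‖ ^ 2 / 4) ≤
      proximalLinear (accumulatedLoss a (n + 1)) c (m (n + 1)) := by
  induction n with
  | zero => simp [accumulatedLoss_one, proximalLinear]
  | succ n ih =>
    rw [Finset.sum_Icc_succ_top (by omega), accumulatedLoss_succ a (by omega : 1 ≤ n + 1)]
    have hstep := (hm (n + 1)).add_inner_sub_le (a := a (n + 1)) (hm (n + 1 + 1)).1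
    linarith

lemma sum_inner_leader_sub_le
    (hm : ∀ t, IsStrongMinOn (proximalLinear (accumulatedLoss a t) c) K (m t)) (hz : z ∈ K)
    (n : ℕ) :
    ∑ t ∈ Finset.Icc 1 n, ⟪a t, m t - z⟫ ≤
      ‖z - c‖ ^ 2 + ∑ t ∈ Finset.Icc 1 n, ‖a t‖ ^ 2 / 4 := by
  have hmin := (hm (n + 1)).2 z hz
  have hleader := sum_inner_leader_le_min hm n
  have hloss : ⟪accumulatedLoss a (n + 1), z⟫ = ∑ t ∈ Finset.Icc 1 n, ⟪a t, z⟫ := sum_inner _ _ _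
  rw [Finset.sum_sub_distrib] at hleader
  simp only [inner_sub_right, Finset.sum_sub_distrib]
  rw [proximalLinear.eq_1 _ c z, hloss] at hmin
  linarith [sq_nonneg ‖z - m (n + 1)‖]

end Leader

/-- `T` rounds of the online conditional gradient algorithm on `K` with step sizes `σ` against the
linear losses `⟪a t, ·⟫`: `x` are the iterates and `v` the answers of the linear oracle. For the
algorithm with learning rate `η` one takes `a t = η • ∇_t`. -/
structure IsConditionalGradientRun (K : Set E) (σ : ℕ → ℝ) (a x v : ℕ → E) (T : ℕ) : Prop where
  init_mem : x 1 ∈ K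
  oracle_mem : ∀ t ∈ Finset.Icc 1 T, v t ∈ K
  oracle_le : ∀ t ∈ Finset.Icc 1 T, ∀ z ∈ K,
    ⟪accumulatedLoss a t + (2 : ℝ) • (x t - x 1), v t⟫ ≤
      ⟪accumulatedLoss a t + (2 : ℝ) • (x t - x 1), z⟫
  step : ∀ t ∈ Finset.Icc 1 T, x (t + 1) = (1 - σ t) • x t + σ t • v t

namespace IsConditionalGradientRun

variable {K : Set E} {σ B : ℕ → ℝ} {a x v m : ℕ → E} {T : ℕ} {D δ : ℝ} {z : E}

lemma mem (hrun : IsConditionalGradientRun K σ a x v T) (hK : Convex ℝ K) (hσ₀ : ∀ t, 0 ≤ σ t)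
    (hσ₁ : ∀ t, σ t ≤ 1) : ∀ t ∈ Finset.Icc 1 T, x t ∈ K := by
  intro t ht
  obtain ⟨ht₁, htT⟩ := Finset.mem_Icc.1 ht
  clear ht
  induction t, ht₁ using Nat.le_induction with
  | base => exact hrun.init_mem
  | succ t ht₁ ih =>
    have ht : t ∈ Finset.Icc 1 T := Finset.mem_Icc.2 ⟨ht₁, by omega⟩
    rw [hrun.step t ht]
    exact hK (ih (by omega)) (hrun.oracle_mem t ht) (sub_nonneg.2 (hσ₁ t)) (hσ₀ t)
      (sub_add_cancel 1 (σ t))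

lemma restrict {K' : Set E} (hrun : IsConditionalGradientRun K σ a x v T) (hsub : K' ⊆ K)
    (hinit : x 1 ∈ K') (horacle : ∀ t ∈ Finset.Icc 1 T, v t ∈ K') :
    IsConditionalGradientRun K' σ a x v T where
  init_mem := hinit
  oracle_mem := horacle
  oracle_le t ht z hz := hrun.oracle_le t ht z (hsub hz)
  step := hrun.step

lemma gap_succ_le (hrun : IsConditionalGradientRun K σ a x v T) (hK : Convex ℝ K)
    (hdiam : ∀ y ∈ K, ∀ z ∈ K, ‖y - z‖ ≤ D) (hσ₀ : ∀ t, 0 ≤ σ t) (hσ₁ : ∀ t, σ t ≤ 1)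
    (hm : ∀ t, IsStrongMinOn (proximalLinear (accumulatedLoss a t) (x 1)) K (m t))
    {t : ℕ} (ht : t ∈ Finset.Icc 1 T) :
    proximalLinear (accumulatedLoss a (t + 1)) (x 1) (x (t + 1)) -
        proximalLinear (accumulatedLoss a (t + 1)) (x 1) (m (t + 1)) ≤
      (1 - σ t) * (proximalLinear (accumulatedLoss a t) (x 1) (x t) -
        proximalLinear (accumulatedLoss a t) (x 1) (m t)) + σ t ^ 2 * D ^ 2 +
      ‖a t‖ * ‖x (t + 1) - m (t + 1)‖ := by
  have hstep := proximalLinear_conditionalGradient_step_sub_le (hσ₀ t)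
    (hrun.oracle_le t ht (m t) (hm t).1)
    (hdiam _ (hrun.oracle_mem t ht) _ (hrun.mem hK hσ₀ hσ₁ t ht))
  have hshift := (hm t).gap_add_left_le (x := x (t + 1)) (a := a t) (hm (t + 1)).1
  rw [← hrun.step t ht] at hstep
  rw [accumulatedLoss_succ a (Finset.mem_Icc.1 ht).1]
  linarith

lemma gap_le_sq (hrun : IsConditionalGradientRun K σ a x v T) (hK : Convex ℝ K)
    (hdiam : ∀ y ∈ K, ∀ z ∈ K, ‖y - z‖ ≤ D) (hσ₀ : ∀ t, 0 ≤ σ t) (hσ₁ : ∀ t, σ t ≤ 1)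
    (hδ : ∀ t ∈ Finset.Icc 1 T, ‖a t‖ ≤ δ)
    (hm : ∀ t, IsStrongMinOn (proximalLinear (accumulatedLoss a t) (x 1)) K (m t))
    (hB : ∀ t, 1 ≤ t → 0 < B t)
    (hrec : ∀ t, 1 ≤ t → t + 1 ≤ T →
      (1 - σ t) * B t ^ 2 + σ t ^ 2 * D ^ 2 + δ * B (t + 1) ≤ B (t + 1) ^ 2) :
    ∀ t ∈ Finset.Icc 1 T, proximalLinear (accumulatedLoss a t) (x 1) (x t) -
      proximalLinear (accumulatedLoss a t) (x 1) (m t) ≤ B t ^ 2 := by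
  intro t ht
  obtain ⟨ht₁, htT⟩ := Finset.mem_Icc.1 ht
  clear ht
  induction t, ht₁ using Nat.le_induction with
  | base =>
    simp only [accumulatedLoss_one, proximalLinear, inner_zero_left, sub_self, norm_zero]
    linarith [sq_nonneg ‖m 1 - x 1‖, sq_nonneg (B 1)]
  | succ t ht₁ ih =>
    have ht : t ∈ Finset.Icc 1 T := Finset.mem_Icc.2 ⟨ht₁, by omega⟩
    have ht' : t + 1 ∈ Finset.Icc 1 T := Finset.mem_Icc.2 ⟨by omega, htT⟩
    have hgrowth := (hm (t + 1)).2 _ (hrun.mem hK hσ₀ hσ₁ (t + 1) ht')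
    have hsucc := hrun.gap_succ_le hK hdiam hσ₀ hσ₁ hm ht
    set gap := proximalLinear (accumulatedLoss a (t + 1)) (x 1) (x (t + 1)) -
      proximalLinear (accumulatedLoss a (t + 1)) (x 1) (m (t + 1))
    have hdist_sq : ‖x (t + 1) - m (t + 1)‖ ^ 2 ≤ gap := by linarith
    have hgap : 0 ≤ gap := (sq_nonneg _).trans hdist_sq
    have hshift : ‖a t‖ * ‖x (t + 1) - m (t + 1)‖ ≤ δ * √gap :=
      mul_le_mul (hδ t ht) (Real.le_sqrt_of_sq_le hdist_sq) (norm_nonneg _)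
        ((norm_nonneg _).trans (hδ t ht))
    have hcontract := mul_le_mul_of_nonneg_left (ih (by omega)) (sub_nonneg.2 (hσ₁ t))
    have hsqrt : √gap ≤ B (t + 1) := by
      refine le_of_sq_le_add_mul ?_ (hB _ (by omega)) (hrec t ht₁ htT) ?_
      · have := sub_nonneg.2 (hσ₁ t)
        positivity
      · rw [Real.sq_sqrt hgap]
        linarith
    exact (Real.sqrt_le_left (hB _ (by omega)).le).1 hsqrt

lemma sum_inner_sub_le_of_isComplete (hrun : IsConditionalGradientRun K σ a x v T)
    (hK : Convex ℝ K) (hcomplete : IsComplete K)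
    (hdiam : ∀ y ∈ K, ∀ z ∈ K, ‖y - z‖ ≤ D) (hσ₀ : ∀ t, 0 ≤ σ t) (hσ₁ : ∀ t, σ t ≤ 1)
    (hδ : ∀ t ∈ Finset.Icc 1 T, ‖a t‖ ≤ δ) (hB : ∀ t, 1 ≤ t → 0 < B t)
    (hrec : ∀ t, 1 ≤ t → t + 1 ≤ T →
      (1 - σ t) * B t ^ 2 + σ t ^ 2 * D ^ 2 + δ * B (t + 1) ≤ B (t + 1) ^ 2) (hz : z ∈ K) :
    ∑ t ∈ Finset.Icc 1 T, ⟪a t, x t - z⟫ ≤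
      D ^ 2 + δ * ∑ t ∈ Finset.Icc 1 T, B t + T * (δ ^ 2 / 4) := by
  choose m hm using fun t => exists_isStrongMinOn_proximalLinear ⟨x 1, hrun.init_mem⟩ hcomplete hK
    (accumulatedLoss a t) (x 1)
  have hleader := sum_inner_leader_sub_le hm hz T
  have hdiam_sq : ‖z - x 1‖ ^ 2 ≤ D ^ 2 := by
    have := hdiam z hz _ hrun.init_mem
    gcongr
  have hlosses : ∑ t ∈ Finset.Icc 1 T, ‖a t‖ ^ 2 / 4 ≤ T * (δ ^ 2 / 4) := by
    calc ∑ t ∈ Finset.Icc 1 T, ‖a t‖ ^ 2 / 4 ≤ ∑ t ∈ Finset.Icc 1 T, δ ^ 2 / 4 := by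
          gcongr with t ht
          exact hδ t ht
      _ = T * (δ ^ 2 / 4) := by simp
  have htracking : ∑ t ∈ Finset.Icc 1 T, ⟪a t, x t - m t⟫ ≤ δ * ∑ t ∈ Finset.Icc 1 T, B t := by
    rw [Finset.mul_sum]
    refine Finset.sum_le_sum fun t ht => (real_inner_le_norm _ _).trans ?_
    have hgrowth := (hm t).2 _ (hrun.mem hK hσ₀ hσ₁ t ht)
    have hgap := hrun.gap_le_sq hK hdiam hσ₀ hσ₁ hδ hm hB hrec t ht
    have hdist : ‖x t - m t‖ ≤ B t :=
      le_of_sq_le_sq (by linarith) (hB t (Finset.mem_Icc.1 ht).1).le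
    exact mul_le_mul (hδ t ht) hdist (norm_nonneg _) ((norm_nonneg _).trans (hδ t ht))
  calc ∑ t ∈ Finset.Icc 1 T, ⟪a t, x t - z⟫
      = ∑ t ∈ Finset.Icc 1 T, ⟪a t, x t - m t⟫ + ∑ t ∈ Finset.Icc 1 T, ⟪a t, m t - z⟫ := by
        simp only [← Finset.sum_add_distrib, ← inner_add_right, sub_add_sub_cancel]
    _ ≤ D ^ 2 + δ * ∑ t ∈ Finset.Icc 1 T, B t + T * (δ ^ 2 / 4) := by linarith

lemma sum_inner_sub_le (hrun : IsConditionalGradientRun K σ a x v T) (hK : Convex ℝ K)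
    (hdiam : ∀ y ∈ K, ∀ z ∈ K, ‖y - z‖ ≤ D) (hσ₀ : ∀ t, 0 ≤ σ t) (hσ₁ : ∀ t, σ t ≤ 1)
    (hδ : ∀ t ∈ Finset.Icc 1 T, ‖a t‖ ≤ δ) (hB : ∀ t, 1 ≤ t → 0 < B t)
    (hrec : ∀ t, 1 ≤ t → t + 1 ≤ T →
      (1 - σ t) * B t ^ 2 + σ t ^ 2 * D ^ 2 + δ * B (t + 1) ≤ B (t + 1) ^ 2) (hz : z ∈ K) :
    ∑ t ∈ Finset.Icc 1 T, ⟪a t, x t - z⟫ ≤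
      D ^ 2 + δ * ∑ t ∈ Finset.Icc 1 T, B t + T * (δ ^ 2 / 4) := by
  let points : Set E := insert z (insert (x 1) (v '' Finset.Icc 1 T))
  have hfinite : points.Finite := (((Finset.Icc 1 T).finite_toSet.image v).insert _).insert _
  have hpoints : points ⊆ convexHull ℝ points := subset_convexHull ℝ points
  have hsub : convexHull ℝ points ⊆ K := by
    refine convexHull_min ?_ hK
    rintro y (rfl | rfl | ⟨t, ht, rfl⟩)
    exacts [hz, hrun.init_mem, hrun.oracle_mem t ht]
  have hrun' : IsConditionalGradientRun (convexHull ℝ points) σ a x v T :=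
    hrun.restrict hsub (hpoints (by simp [points]))
      fun t ht => hpoints (.inr (.inr (Set.mem_image_of_mem v ht)))
  exact hrun'.sum_inner_sub_le_of_isComplete (convex_convexHull ℝ points)
    (hfinite.isCompact_convexHull ℝ).isComplete (fun y hy z hz => hdiam y (hsub hy) z (hsub hz))
    hσ₀ hσ₁ hδ hB hrec (hpoints (Set.mem_insert z _))

end IsConditionalGradientRun

section Parameters

variable {D : ℝ} {T : ℕ}

lemma schedule_recursion_le {σ : ℝ} {t : ℕ} (ht : 1 ≤ t) (htT : t + 1 ≤ T)
    (hσ : σ = min 1 (2 / √t)) :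
    (1 - σ) * (2 * D * (t : ℝ) ^ (-(1 / 4) : ℝ)) ^ 2 + σ ^ 2 * D ^ 2 +
        D / (2 * (T : ℝ) ^ (3 / 4 : ℝ)) * (2 * D * ((t + 1 : ℕ) : ℝ) ^ (-(1 / 4) : ℝ)) ≤
      (2 * D * ((t + 1 : ℕ) : ℝ) ^ (-(1 / 4) : ℝ)) ^ 2 := by
  have hpos : (0 : ℝ) < ((t + 1 : ℕ) : ℝ) := by positivity
  have hshift : D / (2 * (T : ℝ) ^ (3 / 4 : ℝ)) * (2 * D * ((t + 1 : ℕ) : ℝ) ^ (-(1 / 4) : ℝ)) ≤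
      D ^ 2 * (1 / ((t + 1 : ℕ) : ℝ)) := by
    have hT : ((t + 1 : ℕ) : ℝ) ^ (3 / 4 : ℝ) ≤ (T : ℝ) ^ (3 / 4 : ℝ) := by gcongr
    calc D / (2 * (T : ℝ) ^ (3 / 4 : ℝ)) * (2 * D * ((t + 1 : ℕ) : ℝ) ^ (-(1 / 4) : ℝ))
        = D ^ 2 * (1 / (T : ℝ) ^ (3 / 4 : ℝ) * ((t + 1 : ℕ) : ℝ) ^ (-(1 / 4) : ℝ)) := by ring
      _ ≤ D ^ 2 * (1 / ((t + 1 : ℕ) : ℝ) ^ (3 / 4 : ℝ) * ((t + 1 : ℕ) : ℝ) ^ (-(1 / 4) : ℝ)) := by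
          gcongr
      _ = D ^ 2 * (1 / ((t + 1 : ℕ) : ℝ)) := by
          rw [one_div (_ ^ _), ← Real.rpow_neg hpos.le, ← Real.rpow_add hpos,
            show (-(3 / 4) + -(1 / 4) : ℝ) = -1 by norm_num, Real.rpow_neg_one, one_div]
  have hstep := mul_le_mul_of_nonneg_left (stepSize_recursion_le ht hσ) (sq_nonneg D)
  rw [mul_pow _ (_ ^ _), mul_pow _ (_ ^ _), sq_rpow_neg_one_div_four t.cast_nonneg,
    sq_rpow_neg_one_div_four hpos.le]
  push_cast at hshift ⊢
  linear_combination hshift + hstep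

lemma regret_constant_le (hD : 0 ≤ D) (hT : 1 ≤ T) :
    D ^ 2 + D / (2 * (T : ℝ) ^ (3 / 4 : ℝ)) *
        ∑ t ∈ Finset.Icc 1 T, 2 * D * (t : ℝ) ^ (-(1 / 4) : ℝ) +
      T * ((D / (2 * (T : ℝ) ^ (3 / 4 : ℝ))) ^ 2 / 4) ≤ 4 * D ^ 2 := by
  have hsum := mul_sum_Icc_rpow_sub_one_le (q := 3 / 4) (by norm_num) (by norm_num) T
  rw [show (3 / 4 : ℝ) - 1 = -(1 / 4) by norm_num] at hsum
  have hT_le : (T : ℝ) ≤ ((T : ℝ) ^ (3 / 4 : ℝ)) ^ 2 := by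
    rw [← Real.rpow_mul_natCast (by positivity)]
    exact Real.self_le_rpow_of_one_le (by exact_mod_cast hT) (by norm_num)
  have hP : 0 < (T : ℝ) ^ (3 / 4 : ℝ) := by positivity
  rw [← Finset.mul_sum]
  set P := (T : ℝ) ^ (3 / 4 : ℝ)
  set S := ∑ t ∈ Finset.Icc 1 T, (t : ℝ) ^ (-(1 / 4) : ℝ)
  have htracking : D / (2 * P) * (2 * D * S) ≤ 4 / 3 * D ^ 2 := by
    calc D / (2 * P) * (2 * D * S) ≤ D / (2 * P) * (2 * D * (4 / 3 * P)) := by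
          gcongr
          linarith
      _ = 4 / 3 * D ^ 2 := by field_simp
  have hlosses : T * ((D / (2 * P)) ^ 2 / 4) ≤ D ^ 2 / 16 := by
    calc T * ((D / (2 * P)) ^ 2 / 4) ≤ P ^ 2 * ((D / (2 * P)) ^ 2 / 4) := by gcongr
      _ = D ^ 2 / 16 := by field_simp; ring
  linarith [sq_nonneg D]

end Parameters

theorem online_conditional_gradient_regret_general {K : Set E} (hK : Convex ℝ K) {D G : ℝ}
    (hD : 0 < D) (hG : 0 < G) (hdiam : ∀ x ∈ K, ∀ y ∈ K, ‖x - y‖ ≤ D) {T : ℕ} (hT : 1 ≤ T)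
    {f : ℕ → E → ℝ} {gf : ℕ → E → E}
    (hsubgrad : ∀ t ∈ Finset.Icc 1 T, ∀ y ∈ K, ∀ z ∈ K, f t y - f t z ≤ ⟪gf t y, y - z⟫)
    (hGb : ∀ t ∈ Finset.Icc 1 T, ∀ y ∈ K, ‖gf t y‖ ≤ G)
    {η : ℝ} (hη : η = D / (2 * G * (T : ℝ) ^ ((3 : ℝ) / 4)))
    {σ : ℕ → ℝ} (hσ : ∀ t : ℕ, σ t = min 1 (2 / √t)) {x v : ℕ → E}
    (hrun : IsConditionalGradientRun K σ (fun t => η • gf t (x t)) x v T) {z : E} (hz : z ∈ K) :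
    ∑ t ∈ Finset.Icc 1 T, f t (x t) - ∑ t ∈ Finset.Icc 1 T, f t z ≤
      8 * D * G * (T : ℝ) ^ ((3 : ℝ) / 4) := by
  have hσ₀ (t : ℕ) : 0 ≤ σ t := by rw [hσ]; positivity
  have hσ₁ (t : ℕ) : σ t ≤ 1 := (hσ t).trans_le (min_le_left _ _)
  have hη₀ : 0 < η := by rw [hη]; positivity
  have hmem := hrun.mem hK hσ₀ hσ₁
  have hloss (t : ℕ) (ht : t ∈ Finset.Icc 1 T) :
      ‖η • gf t (x t)‖ ≤ D / (2 * (T : ℝ) ^ (3 / 4 : ℝ)) :=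
    calc ‖η • gf t (x t)‖ ≤ η * G := by
          rw [norm_smul, Real.norm_of_nonneg hη₀.le]
          gcongr
          exact hGb t ht _ (hmem t ht)
      _ = D / (2 * (T : ℝ) ^ (3 / 4 : ℝ)) := by rw [hη]; field_simp
  have hlinear : ∑ t ∈ Finset.Icc 1 T, ⟪η • gf t (x t), x t - z⟫ ≤ 4 * D ^ 2 :=
    (hrun.sum_inner_sub_le hK hdiam hσ₀ hσ₁ hloss
      (B := fun t => 2 * D * (t : ℝ) ^ (-(1 / 4) : ℝ)) (fun t ht => by positivity)
      (fun t ht htT => schedule_recursion_le ht htT (hσ t)) hz).trans (regret_constant_le hD.le hT)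
  refine le_of_mul_le_mul_left ?_ hη₀
  calc η * (∑ t ∈ Finset.Icc 1 T, f t (x t) - ∑ t ∈ Finset.Icc 1 T, f t z)
      ≤ η * ∑ t ∈ Finset.Icc 1 T, ⟪gf t (x t), x t - z⟫ := by
        rw [← Finset.sum_sub_distrib]
        gcongr with t ht
        exact hsubgrad t ht _ (hmem t ht) z hz
    _ = ∑ t ∈ Finset.Icc 1 T, ⟪η • gf t (x t), x t - z⟫ := by
        simp only [Finset.mul_sum, real_inner_smul_left]
    _ ≤ 4 * D ^ 2 := hlinear
    _ = η * (8 * D * G * (T : ℝ) ^ ((3 : ℝ) / 4)) := by rw [hη]; field_simp; norm_num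

end InnerProductSpace

/-- **Regret of the online conditional gradient algorithm** with parameters
`η = D/(2G·T^{3/4})` and `σ_t = min{1, 2/√t}`:
`Σ_t f_t(x_t) − min_{x ∈ K} Σ_t f_t(x) ≤ 8·D·G·T^{3/4}`.  Here
`∇F_t(x_t) = η·Σ_{τ=1}^{t−1} ∇f_τ(x_τ) + 2(x_t − x_1)`. -/
theorem online_conditional_gradient_regret
    {d : ℕ} (K : Set (EuclideanSpace ℝ (Fin d)))
    (hKcomp : IsCompact K) (hKconv : Convex ℝ K)
    (D G : ℝ) (hD : 0 < D) (hG : 0 < G)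
    (hdiam : ∀ x ∈ K, ∀ y ∈ K, ‖x - y‖ ≤ D)
    (T : ℕ) (hT : 1 ≤ T)
    (f : ℕ → EuclideanSpace ℝ (Fin d) → ℝ)
    (hconv : ∀ t ∈ Finset.Icc 1 T, ConvexOn ℝ K (f t))
    (gf : ℕ → EuclideanSpace ℝ (Fin d) → EuclideanSpace ℝ (Fin d))
    (hgf : ∀ t ∈ Finset.Icc 1 T, ∀ z ∈ K, HasGradientAt (f t) (gf t z) z)
    (hGb : ∀ t ∈ Finset.Icc 1 T, ∀ z ∈ K, ‖gf t z‖ ≤ G)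
    (η : ℝ) (hη : η = D / (2 * G * (T : ℝ) ^ ((3 : ℝ) / 4)))
    (σ : ℕ → ℝ) (hσ : ∀ t : ℕ, σ t = min 1 (2 / Real.sqrt t))
    (x v : ℕ → EuclideanSpace ℝ (Fin d)) (hx1 : x 1 ∈ K)
    (hv : ∀ t ∈ Finset.Icc 1 T, v t ∈ K ∧ ∀ z ∈ K,
      ⟪η • (∑ τ ∈ Finset.Icc 1 (t - 1), gf τ (x τ)) + (2 : ℝ) • (x t - x 1), v t⟫ ≤
        ⟪η • (∑ τ ∈ Finset.Icc 1 (t - 1), gf τ (x τ)) + (2 : ℝ) • (x t - x 1), z⟫)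
    (hrec : ∀ t ∈ Finset.Icc 1 T, x (t + 1) = (1 - σ t) • x t + σ t • v t) :
    ∀ z ∈ K,
      ∑ t ∈ Finset.Icc 1 T, f t (x t) - ∑ t ∈ Finset.Icc 1 T, f t z ≤
        8 * D * G * (T : ℝ) ^ ((3 : ℝ) / 4) := by
  intro z hz
  refine online_conditional_gradient_regret_general hKconv hD hG hdiam hT
    (fun t ht y hy w hw =>
      sub_le_inner_of_convexOn_of_hasGradientAt (hconv t ht) hy hw (hgf t ht y hy))
    hGb hη hσ ⟨hx1, fun t ht => (hv t ht).1, fun t ht => ?_, hrec⟩ hz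
  simpa only [accumulatedLoss, ← Finset.smul_sum] using (hv t ht).2
end

section
/- (von Neumann minimax theorem for zero-sum games) Let A ∈ [0,1]^{n×m} be the loss matrix of a two-player zero-sum game. Then min_{x ∈ Δ_n} max_{y ∈ Δ_m} xᵀAy = max_{y ∈ Δ_m} min_{x ∈ Δ_n} xᵀAy, where Δ_n = {x ∈ ℝ^n : x_i ≥ 0, Σ_i x_i = 1} and Δ_m = {y ∈ ℝ^m : y_j ≥ 0, Σ_j y_j = 1} are the probability simplices (the minima and maxima are attained by compactness and continuity). -/
/-!
A bilinear payoff is both convex and concave in each variable and continuous in each variable, and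
the simplices are convex and compact, so Sion's theorem provides a saddle point `(a, b)`. At a
saddle point `f a b` is at once the least worst-case loss and the greatest guaranteed payoff.
-/

open Set

section SaddlePoint

variable {E F β : Type*} {X : Set E} {Y : Set F} {f : E → F → β} {a : E} {b : F}

theorem isGreatest_image_of_isSaddlePointOn [Preorder β] (h : IsSaddlePointOn X Y f a b)
    (ha : a ∈ X) (hb : b ∈ Y) : IsGreatest (f a '' Y) (f a b) :=
  ⟨mem_image_of_mem _ hb, forall_mem_image.mpr (h a ha)⟩

theorem isLeast_image_sSup_of_isSaddlePointOn [ConditionallyCompleteLattice β]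
    (h : IsSaddlePointOn X Y f a b) (ha : a ∈ X) (hb : b ∈ Y)
    (hbdd : ∀ x ∈ X, BddAbove (f x '' Y)) :
    IsLeast ((fun x => sSup (f x '' Y)) '' X) (f a b) := by
  refine ⟨⟨a, ha, (isGreatest_image_of_isSaddlePointOn h ha hb).csSup_eq⟩, ?_⟩
  refine forall_mem_image.mpr fun x hx => ?_
  calc
    f a b ≤ f x b := h x hx b hb
    _ ≤ sSup (f x '' Y) := le_csSup (hbdd x hx) (mem_image_of_mem _ hb)

theorem isGreatest_image_sInf_of_isSaddlePointOn [ConditionallyCompleteLattice β]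
    (h : IsSaddlePointOn X Y f a b) (ha : a ∈ X) (hb : b ∈ Y)
    (hbdd : ∀ y ∈ Y, BddBelow ((f · y) '' X)) :
    IsGreatest ((fun y => sInf ((f · y) '' X)) '' Y) (f a b) :=
  isLeast_image_sSup_of_isSaddlePointOn (β := βᵒᵈ) (f := fun y x => OrderDual.toDual (f x y))
    (fun y hy x hx => h x hx y hy) hb ha hbdd

theorem sInf_sSup_eq_sSup_sInf_of_isSaddlePointOn [ConditionallyCompleteLattice β]
    (h : IsSaddlePointOn X Y f a b) (ha : a ∈ X) (hb : b ∈ Y)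
    (habove : ∀ x ∈ X, BddAbove (f x '' Y)) (hbelow : ∀ y ∈ Y, BddBelow ((f · y) '' X)) :
    sInf ((fun x => sSup (f x '' Y)) '' X) = sSup ((fun y => sInf ((f · y) '' X)) '' Y) :=
  (isLeast_image_sSup_of_isSaddlePointOn h ha hb habove).csInf_eq.trans
    (isGreatest_image_sInf_of_isSaddlePointOn h ha hb hbelow).csSup_eq.symm

end SaddlePoint

section CompactConvex

variable {E F : Type*} {X : Set E} {Y : Set F}
  [TopologicalSpace E] [AddCommGroup E] [Module ℝ E] [IsTopologicalAddGroup E] [ContinuousSMul ℝ E]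
  [TopologicalSpace F] [AddCommGroup F] [Module ℝ F] [IsTopologicalAddGroup F] [ContinuousSMul ℝ F]

theorem sInf_sSup_eq_sSup_sInf_of_quasiconvexOn_of_quasiconcaveOn {f : E → F → ℝ}
    (neX : X.Nonempty) (cX : Convex ℝ X) (kX : IsCompact X)
    (neY : Y.Nonempty) (cY : Convex ℝ Y) (kY : IsCompact Y)
    (hlsc : ∀ y ∈ Y, LowerSemicontinuousOn (f · y) X) (hconv : ∀ y ∈ Y, QuasiconvexOn ℝ X (f · y))
    (husc : ∀ x ∈ X, UpperSemicontinuousOn (f x) Y) (hconc : ∀ x ∈ X, QuasiconcaveOn ℝ Y (f x)) :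
    sInf ((fun x => sSup (f x '' Y)) '' X) = sSup ((fun y => sInf ((f · y) '' X)) '' Y) := by
  obtain ⟨a, ha, b, hb, hab⟩ :=
    Sion.exists_isSaddlePointOn neX cX kX hlsc hconv cY neY kY husc hconc
  exact sInf_sSup_eq_sSup_sInf_of_isSaddlePointOn hab ha hb
    (fun x hx => (husc x hx).bddAbove_of_isCompact kY)
    (fun y hy => (hlsc y hy).bddBelow_of_isCompact kX)

theorem sInf_sSup_eq_sSup_sInf_of_bilinear (B : E →ₗ[ℝ] F →ₗ[ℝ] ℝ)
    (neX : X.Nonempty) (cX : Convex ℝ X) (kX : IsCompact X)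
    (neY : Y.Nonempty) (cY : Convex ℝ Y) (kY : IsCompact Y)
    (hleft : ∀ y ∈ Y, ContinuousOn (B · y) X) (hright : ∀ x ∈ X, ContinuousOn (B x) Y) :
    sInf ((fun x => sSup (B x '' Y)) '' X) = sSup ((fun y => sInf ((B · y) '' X)) '' Y) :=
  sInf_sSup_eq_sSup_sInf_of_quasiconvexOn_of_quasiconcaveOn (f := fun x y => B x y)
    neX cX kX neY cY kY
    (fun y hy => (hleft y hy).lowerSemicontinuousOn)
    (fun y _ => ((B.flip y).convexOn cX).quasiconvexOn)
    (fun x hx => (hright x hx).upperSemicontinuousOn)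
    (fun x _ => ((B x).concaveOn cY).quasiconcaveOn)

end CompactConvex

theorem von_neumann_minimax_general {ι κ : Type*} [Fintype ι] [Fintype κ] [Nonempty ι] [Nonempty κ]
    (A : Matrix ι κ ℝ) :
    sInf ((fun x : ι → ℝ =>
        sSup ((fun y : κ → ℝ => ∑ i, ∑ j, x i * A i j * y j) '' stdSimplex ℝ κ)) ''
          stdSimplex ℝ ι) =
      sSup ((fun y : κ → ℝ =>
        sInf ((fun x : ι → ℝ => ∑ i, ∑ j, x i * A i j * y j) '' stdSimplex ℝ ι)) ''
          stdSimplex ℝ κ) := by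
  classical
  let B : (ι → ℝ) →ₗ[ℝ] (κ → ℝ) →ₗ[ℝ] ℝ := Matrix.toLinearMap₂' ℝ A
  have payoff_eq (x : ι → ℝ) (y : κ → ℝ) : ∑ i, ∑ j, x i * A i j * y j = B x y := by
    simp only [B, Matrix.toLinearMap₂'_apply, smul_eq_mul, mul_assoc, mul_comm (A _ _)]
  simp only [payoff_eq]
  exact sInf_sSup_eq_sSup_sInf_of_bilinear B
    (nonempty_coe_sort.mp inferInstance) (convex_stdSimplex ℝ ι) (isCompact_stdSimplex ℝ ι)
    (nonempty_coe_sort.mp inferInstance) (convex_stdSimplex ℝ κ) (isCompact_stdSimplex ℝ κ)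
    (fun y _ => (B.flip y).continuous_of_finiteDimensional.continuousOn)
    (fun x _ => (B x).continuous_of_finiteDimensional.continuousOn)

/-- **von Neumann's minimax theorem for zero-sum games.** For a loss matrix
`A ∈ [0,1]^{n×m}`, `min_{x ∈ Δ_n} max_{y ∈ Δ_m} xᵀAy = max_{y ∈ Δ_m} min_{x ∈ Δ_n} xᵀAy`
(the inner optima over the compact simplices are expressed via `sSup`/`sInf` of the
corresponding image sets; all of them are attained by compactness and continuity). -/
theorem von_neumann_minimax
    {n m : ℕ} (hn : 0 < n) (hm : 0 < m)
    (A : Matrix (Fin n) (Fin m) ℝ) (hA : ∀ i j, A i j ∈ Set.Icc (0 : ℝ) 1) :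
    sInf ((fun x : Fin n → ℝ =>
        sSup ((fun y : Fin m → ℝ => ∑ i, ∑ j, x i * A i j * y j) ''
          stdSimplex ℝ (Fin m))) '' stdSimplex ℝ (Fin n)) =
      sSup ((fun y : Fin m → ℝ =>
        sInf ((fun x : Fin n → ℝ => ∑ i, ∑ j, x i * A i j * y j) ''
          stdSimplex ℝ (Fin n))) '' stdSimplex ℝ (Fin m)) := by
  have : Nonempty (Fin n) := Fin.pos_iff_nonempty.mp hn
  have : Nonempty (Fin m) := Fin.pos_iff_nonempty.mp hm
  exact von_neumann_minimax_general A
end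

section
/- (No Free Lunch) Let X be a finite domain with |X| = 2m > 4, and let A be any learning algorithm, i.e., any function mapping each labeled sample S ∈ (X × {0,1})^m to a hypothesis A(S) : X → {0,1}. Then there exists a concept C : X → {0,1} such that, with D_C the distribution on X × {0,1} obtained by drawing x uniformly from X and labeling it y = C(x): (1) the generalization error of C under D_C is zero; and (2) with probability at least 1/10 over a sample S of m i.i.d. draws from D_C, the generalization error of A(S) is at least 1/10, i.e., Pr_{S ~ D_C^m}[ error_{D_C}(A(S)) ≥ 1/10 ] ≥ 1/10. -/
/-!
Draw the concept at random among those taking two fixed labels. A point outside the sample is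
misclassified with probability at least `1/2`, since changing the label of that point does not
change the learner's prediction there. A sample of size `n` misses a fraction at least `1 - n / |X|`
of the domain, so averaging over concepts, samples and points produces one concept whose expected
error is at least `(1 - n / |X|) / 2`. As errors are at most `1`, a reverse Markov inequality turns
this expectation bound into a probability bound.
-/

open scoped BigOperators

section UniformProb

variable {α : Type*} [Fintype α]

/-- The probability of the event `s` for a uniformly random element of the finite type `α`, as a
normalized count; it is `0` when `α` is empty. -/
noncomputable def uniformProb (s : Set α) : ℝ :=
  s.ncard / Fintype.card α

lemma uniformProb_eq_expect (s : Set α) : uniformProb s = 𝔼 a, s.indicator (1 : α → ℝ) a := by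
  classical
  simp [uniformProb, Fintype.expect_eq_sum_div_card, Set.indicator_apply,
    Set.ncard_eq_toFinset_card']

lemma uniformProb_nonneg (s : Set α) : 0 ≤ uniformProb s :=
  div_nonneg (Nat.cast_nonneg _) (Nat.cast_nonneg _)

lemma uniformProb_le_one (s : Set α) : uniformProb s ≤ 1 := by
  refine div_le_one_of_le₀ ?_ (Nat.cast_nonneg _)
  exact_mod_cast s.ncard_le_card.trans_eq Nat.card_eq_fintype_card

lemma one_sub_card_div_card_le_uniformProb_compl_range [Nonempty α] {ι : Type*} [Fintype ι]
    (f : ι → α) :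
    1 - (Fintype.card ι : ℝ) / Fintype.card α ≤ uniformProb (Set.range f)ᶜ := by
  have range_le : (Set.range f).ncard ≤ Fintype.card ι := by
    simpa [Set.ncard_univ] using Set.ncard_image_le (f := f) (s := Set.univ)
  have card_eq : (Set.range f).ncard + (Set.range f)ᶜ.ncard = Fintype.card α := by
    rw [Set.ncard_add_ncard_compl, Nat.card_eq_fintype_card]
  have card_le : (Fintype.card α : ℝ) ≤ (Set.range f)ᶜ.ncard + Fintype.card ι := by
    exact_mod_cast (by omega : Fintype.card α ≤ (Set.range f)ᶜ.ncard + Fintype.card ι)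
  have card_pos : (0 : ℝ) < Fintype.card α := by exact_mod_cast Fintype.card_pos
  rwa [uniformProb, one_sub_div card_pos.ne', div_le_div_iff_of_pos_right card_pos,
    sub_le_iff_le_add]

lemma one_half_le_uniformProb_of_mem_or_apply_mem [Nonempty α] {s : Set α} (σ : Equiv.Perm α)
    (hs : ∀ a, a ∈ s ∨ σ a ∈ s) : 1 / 2 ≤ uniformProb s := by
  have one_le_add (a : α) : 1 ≤ s.indicator (1 : α → ℝ) a + s.indicator 1 (σ a) := by
    have indicator_nonneg : 0 ≤ s.indicator (1 : α → ℝ) :=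
      Set.indicator_nonneg fun _ _ => zero_le_one
    rcases hs a with ha | ha
    · simpa [ha] using indicator_nonneg (σ a)
    · simpa [ha] using indicator_nonneg a
  have one_le_two_mul : 1 ≤ uniformProb s + uniformProb s :=
    calc
      1 ≤ 𝔼 a, (s.indicator (1 : α → ℝ) a + s.indicator 1 (σ a)) :=
        Finset.le_expect Finset.univ_nonempty fun a _ => one_le_add a
      _ = uniformProb s + uniformProb s := by
        rw [Finset.expect_add_distrib, uniformProb_eq_expect,
          Fintype.expect_equiv σ (fun a => s.indicator 1 (σ a)) (s.indicator 1) fun _ => rfl]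
  linarith

-- Reverse Markov inequality: pointwise, `f ≤ ε + (1 - ε) · 𝟙{ε ≤ f}`.
lemma expect_sub_div_one_sub_le_uniformProb [Nonempty α] {f : α → ℝ} (hf : ∀ a, f a ≤ 1) {ε : ℝ}
    (hε : ε < 1) : ((𝔼 a, f a) - ε) / (1 - ε) ≤ uniformProb {a | ε ≤ f a} := by
  have le_indicator (a : α) : f a ≤ ε + (1 - ε) * {a | ε ≤ f a}.indicator 1 a := by
    by_cases ha : ε ≤ f a
    · simpa [ha] using hf a
    · simpa [ha] using (not_le.mp ha).le
  rw [div_le_iff₀' (sub_pos.mpr hε), sub_le_iff_le_add']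
  calc
    𝔼 a, f a ≤ 𝔼 a, (ε + (1 - ε) * {a | ε ≤ f a}.indicator 1 a) :=
      Finset.expect_le_expect fun a _ => le_indicator a
    _ = ε + (1 - ε) * uniformProb {a | ε ≤ f a} := by
      rw [Finset.expect_add_distrib, Fintype.expect_const, ← Finset.mul_expect,
        uniformProb_eq_expect]

end UniformProb

section Learning

variable {ι X Y : Type*}

/-- The training sample obtained by labeling the points `xs` with the concept `C`. -/
def labeledSample (C : X → Y) (xs : ι → X) : ι → X × Y :=
  fun k => (xs k, C (xs k))

lemma labeledSample_congr {C C' : X → Y} {xs : ι → X} (h : ∀ k, C (xs k) = C' (xs k)) :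
    labeledSample C xs = labeledSample C' xs :=
  funext fun k => congrArg (Prod.mk (xs k)) (h k)

variable [Fintype X]

/-- The generalization error of the hypothesis `h` when points are drawn uniformly from `X` and
labeled by the concept `C`. -/
noncomputable def generalizationError (h C : X → Y) : ℝ :=
  uniformProb {x | h x ≠ C x}

lemma generalizationError_le_one (h C : X → Y) : generalizationError h C ≤ 1 :=
  uniformProb_le_one _

variable [DecidableEq X]

lemma one_half_le_uniformProb_ne_of_notMem_range {ℓ : Bool → Y} (hℓ : Function.Injective ℓ)
    (A : (ι → X × Y) → X → Y) {xs : ι → X} {x : X} (hx : x ∉ Set.range xs) :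
    1 / 2 ≤ uniformProb {b : X → Bool | A (labeledSample (ℓ ∘ b) xs) x ≠ ℓ (b x)} := by
  let flip (b : X → Bool) : X → Bool := Function.update b x (!b x)
  have flip_involutive : Function.Involutive flip := fun b => by simp [flip]
  have sample_flip (b : X → Bool) :
      labeledSample (ℓ ∘ flip b) xs = labeledSample (ℓ ∘ b) xs :=
    labeledSample_congr fun k => by
      simp [flip, Function.update_of_ne (ne_of_mem_of_not_mem (Set.mem_range_self k) hx)]
  refine one_half_le_uniformProb_of_mem_or_apply_mem flip_involutive.toPerm fun b => ?_
  have label_ne : ℓ (b x) ≠ ℓ (flip b x) := hℓ.ne (by simp [flip])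
  simp only [Set.mem_ofPred_eq, Function.Involutive.coe_toPerm, sample_flip]
  by_contra! h
  exact label_ne (h.1.symm.trans h.2)

variable [Fintype ι] [Nonempty X]

lemma le_expect_generalizationError {ℓ : Bool → Y} (hℓ : Function.Injective ℓ)
    (A : (ι → X × Y) → X → Y) (xs : ι → X) :
    (1 - (Fintype.card ι : ℝ) / Fintype.card X) / 2 ≤
      𝔼 b : X → Bool, generalizationError (A (labeledSample (ℓ ∘ b) xs)) (ℓ ∘ b) := by
  let wrong (x : X) : Set (X → Bool) := {b | A (labeledSample (ℓ ∘ b) xs) x ≠ ℓ (b x)}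
  have unseen_le (x : X) :
      (1 / 2 : ℝ) * (Set.range xs)ᶜ.indicator 1 x ≤ uniformProb (wrong x) := by
    by_cases hx : x ∈ Set.range xs
    · simpa [hx] using uniformProb_nonneg (wrong x)
    · simpa [hx] using one_half_le_uniformProb_ne_of_notMem_range hℓ A hx
  calc
    (1 - (Fintype.card ι : ℝ) / Fintype.card X) / 2
      ≤ 1 / 2 * uniformProb (Set.range xs)ᶜ := by
        linarith [one_sub_card_div_card_le_uniformProb_compl_range xs]
    _ = 𝔼 x, (1 / 2 : ℝ) * (Set.range xs)ᶜ.indicator 1 x := by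
        rw [uniformProb_eq_expect, Finset.mul_expect]
    _ ≤ 𝔼 x, uniformProb (wrong x) := Finset.expect_le_expect fun x _ => unseen_le x
    _ = 𝔼 b : X → Bool, generalizationError (A (labeledSample (ℓ ∘ b) xs)) (ℓ ∘ b) := by
        simp only [generalizationError, uniformProb_eq_expect]
        exact Finset.expect_comm _ _ _

end Learning

lemma exists_le_expect_generalizationError {ι X Y : Type*} [Fintype ι] [DecidableEq ι] [Fintype X]
    [Nonempty X] [Nontrivial Y] (A : (ι → X × Y) → X → Y) :
    ∃ C : X → Y, (1 - (Fintype.card ι : ℝ) / Fintype.card X) / 2 ≤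
      𝔼 xs : ι → X, generalizationError (A (labeledSample C xs)) C := by
  classical
  obtain ⟨y, z, hyz⟩ := exists_pair_ne Y
  let ℓ (b : Bool) : Y := if b then y else z
  have hℓ : Function.Injective ℓ := by simp [ℓ, Function.Injective, hyz, hyz.symm]
  obtain ⟨b, -, hb⟩ := Finset.exists_le_of_le_expect (Finset.univ_nonempty (α := X → Bool)) <|
    (Finset.le_expect Finset.univ_nonempty fun xs _ =>
      le_expect_generalizationError hℓ A xs).trans_eq (Finset.expect_comm _ _ _)
  exact ⟨ℓ ∘ b, hb⟩

theorem no_free_lunch_general {ι X Y : Type*} [Fintype ι] [DecidableEq ι] [Fintype X] [Nonempty X]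
    [Nontrivial Y] (A : (ι → X × Y) → X → Y) {ε : ℝ} (hε : ε < 1) :
    ∃ C : X → Y, ((1 - (Fintype.card ι : ℝ) / Fintype.card X) / 2 - ε) / (1 - ε) ≤
      uniformProb {xs : ι → X | ε ≤ generalizationError (A (labeledSample C xs)) C} := by
  obtain ⟨C, hC⟩ := exists_le_expect_generalizationError A
  refine ⟨C, le_trans ?_ <|
    expect_sub_div_one_sub_le_uniformProb (fun _ => generalizationError_le_one _ _) hε⟩
  have : 0 ≤ 1 - ε := (sub_pos.mpr hε).le
  gcongr

/-- **No Free Lunch theorem.** Let `X` be a finite domain with `|X| = 2m > 4` and let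
`A` be any learning algorithm mapping labeled samples of size `m` to hypotheses
`X → {0,1}`. Then there is a concept `C : X → {0,1}` with zero generalization error
(under the distribution drawing `x` uniformly from `X` labeled by `C`) such that,
with probability at least `1/10` over the i.i.d. uniform sample, the hypothesis
produced by `A` has generalization error at least `1/10`. Probabilities over the
finite uniform distributions are expressed as normalized counts. -/
theorem no_free_lunch
    {X : Type*} [Fintype X] (m : ℕ)
    (hcard : Fintype.card X = 2 * m) (hm : 4 < 2 * m)
    (A : (Fin m → X × Bool) → X → Bool) :
    ∃ C : X → Bool,
      ((Set.ncard {x : X | C x ≠ C x} : ℝ) / Fintype.card X = 0) ∧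
      (1 : ℝ) / 10 ≤
        (Set.ncard {xs : Fin m → X |
            (1 : ℝ) / 10 ≤
              (Set.ncard {x : X | A (fun k => (xs k, C (xs k))) x ≠ C x} : ℝ) /
                Fintype.card X} : ℝ) /
          Fintype.card (Fin m → X) := by
  have : Nonempty X := Fintype.card_pos_iff.mp (by omega)
  obtain ⟨C, hC⟩ := no_free_lunch_general A (ε := 1 / 10) (by norm_num)
  have hm₀ : (m : ℝ) ≠ 0 := by exact_mod_cast (by omega : m ≠ 0)
  have ratio : (Fintype.card (Fin m) : ℝ) / Fintype.card X = 1 / 2 := by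
    simp [hcard, div_mul_cancel_right₀ hm₀]
  exact ⟨C, by simp, le_trans (by rw [ratio]; norm_num) hC⟩
end
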